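/- arXiv:1806.03332 — 2 statements merged into one kernel-verified Lean document; each statement's English description precedes it below -/
import Mathlib

section
/- Let 𝒰, 𝒳, 𝒴 be nonempty finite sets, α ∈ (1,∞), W a channel from 𝒳 to 𝒴, P_U a probability mass function on 𝒰, and V a channel from 𝒰 to 𝒳. Let P_{UY}(u,y) = P_U(u)·∑_{x∈𝒳} V(x|u)W(y|x) be the induced joint pmf on 𝒰×𝒴. Then the Arimoto mutual information I_α^A of P_{UY} satisfies I_α^A(U;Y) ≤ sup over all probability mass functions Q on 𝒳 of I_α^S(Q, W), where I_α^S is the Sibson mutual information of order α. -/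
open Real BigOperators

/-- A probability mass function on a finite set: nonnegative and sums to 1. -/
def IsPMF {X : Type} [Fintype X] (P : X → ℝ) : Prop :=
  (∀ x, 0 ≤ P x) ∧ ∑ x, P x = 1

/-- Sibson mutual information of order α of input pmf `Q` and channel `W`. -/
noncomputable def sibsonMI (α : ℝ) {X Y : Type} [Fintype X] [Fintype Y]
    (Q : X → ℝ) (W : X → Y → ℝ) : ℝ :=
  (α / (α - 1)) * Real.log (∑ y, (∑ x, Q x * W x y ^ α) ^ (1 / α))

/-- Arimoto mutual information of order α of a joint pmf `P` on `U × Y`,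
with `U`-marginal `u ↦ ∑ y, P u y`. -/
noncomputable def arimotoMI (α : ℝ) {U Y : Type} [Fintype U] [Fintype Y]
    (P : U → Y → ℝ) : ℝ :=
  (α / (α - 1)) * Real.log
    ((∑ y, (∑ u, P u y ^ α) ^ (1 / α)) / (∑ u, (∑ y, P u y) ^ α) ^ (1 / α))

/-- for the joint pmf on `U × Y` induced through the Markov chain
`U - X - Y`, the Arimoto mutual information is bounded by the supremum over
input distributions of the Sibson mutual information of the channel `W`. -/
theorem arimoto_le_sup_sibson {U X Y : Type}
    [Fintype U] [Fintype X] [Fintype Y] [Nonempty U] [Nonempty X] [Nonempty Y]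
    (α : ℝ) (hα : 1 < α)
    (W : X → Y → ℝ) (hW : ∀ x, IsPMF (W x))
    (PU : U → ℝ) (hPU : IsPMF PU)
    (V : U → X → ℝ) (hV : ∀ u, IsPMF (V u)) :
    arimotoMI α (fun u y => PU u * ∑ x, V u x * W x y) ≤
      sSup {v : ℝ | ∃ Q : X → ℝ, IsPMF Q ∧ v = sibsonMI α Q W} := by
  have h0 : (0:ℝ) < α := by linarith
  have hi : 0 ≤ 1 / α := by positivity
  have hc : 0 ≤ α / (α - 1) := div_nonneg h0.le (by linarith)
  have hW1 : ∀ x y, W x y ≤ 1 := fun x y => by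
    rw [← (hW x).2]
    exact Finset.single_le_sum (f := W x) (fun i _ => (hW x).1 i) (Finset.mem_univ y)
  have hbdd : BddAbove {v : ℝ | ∃ Q : X → ℝ, IsPMF Q ∧ v = sibsonMI α Q W} := by
    refine ⟨α / (α - 1) * Fintype.card Y, ?_⟩
    rintro v ⟨Q, hQ, rfl⟩
    unfold sibsonMI
    refine mul_le_mul_of_nonneg_left ?_ hc
    have hin : ∀ y, 0 ≤ ∑ x, Q x * W x y ^ α := fun y =>
      Finset.sum_nonneg fun x _ => mul_nonneg (hQ.1 x) (rpow_nonneg ((hW x).1 y) _)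
    refine (Real.log_le_self (Finset.sum_nonneg fun y _ => rpow_nonneg (hin y) _)).trans ?_
    calc ∑ y, (∑ x, Q x * W x y ^ α) ^ (1 / α) ≤ ∑ y : Y, (1:ℝ) := by
          refine Finset.sum_le_sum fun y _ => Real.rpow_le_one (hin y) ?_ hi
          rw [← hQ.2]
          refine Finset.sum_le_sum fun x _ => ?_
          exact mul_le_of_le_one_right (hQ.1 x) (Real.rpow_le_one ((hW x).1 y) (hW1 x y) h0.le)
      _ = Fintype.card Y := by simp
  set Z : U → Y → ℝ := fun u y => ∑ x, V u x * W x y with hZ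
  have hZ0 : ∀ u y, 0 ≤ Z u y := fun u y =>
    Finset.sum_nonneg fun x _ => mul_nonneg ((hV u).1 x) ((hW x).1 y)
  have hZ1 : ∀ u, ∑ y, Z u y = 1 := fun u => by
    simp only [hZ]
    rw [Finset.sum_comm]
    simp only [← Finset.mul_sum, (hW _).2, mul_one, (hV u).2]
  obtain ⟨u0, hu0⟩ : ∃ u, 0 < PU u := by
    by_contra! h
    have := Finset.sum_nonpos (s := Finset.univ) (f := PU) fun u _ => h u
    linarith [hPU.2]
  obtain ⟨y0, hy0⟩ : ∃ y, 0 < Z u0 y := by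
    by_contra! h
    have := Finset.sum_nonpos (s := Finset.univ) (f := Z u0) fun u _ => h u
    linarith [hZ1 u0]
  set S : ℝ := ∑ u, PU u ^ α with hS
  have hSpos : 0 < S := Finset.sum_pos' (fun u _ => rpow_nonneg (hPU.1 u) _)
    ⟨u0, Finset.mem_univ _, rpow_pos_of_pos hu0 _⟩
  let Q : X → ℝ := fun x => (∑ u, PU u ^ α * V u x) / S
  have hQ : IsPMF Q := by
    refine ⟨fun x => div_nonneg (Finset.sum_nonneg fun u _ =>
      mul_nonneg (rpow_nonneg (hPU.1 u) _) ((hV u).1 x)) hSpos.le, ?_⟩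
    simp only [Q]
    rw [← Finset.sum_div, Finset.sum_comm]
    simp only [← Finset.mul_sum, (hV _).2, mul_one]
    exact div_self hSpos.ne'
  refine le_trans ?_ (le_csSup hbdd ⟨Q, hQ, rfl⟩)
  unfold arimotoMI sibsonMI
  refine mul_le_mul_of_nonneg_left ?_ hc
  have hmarg : ∀ u, ∑ y, PU u * Z u y = PU u := fun u => by
    rw [← Finset.mul_sum, hZ1, mul_one]
  change Real.log ((∑ y, (∑ u, (PU u * Z u y) ^ α) ^ (1 / α)) /
    (∑ u, (∑ y, PU u * Z u y) ^ α) ^ (1 / α)) ≤ _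
  simp only [hmarg]
  rw [← hS]
  have hP0 : ∀ u y, 0 ≤ (PU u * Z u y) ^ α := fun u y =>
    rpow_nonneg (mul_nonneg (hPU.1 u) (hZ0 u y)) _
  have hSp : 0 < S ^ (1 / α) := rpow_pos_of_pos hSpos _
  refine Real.log_le_log (div_pos ?_ hSp) ?_
  · refine Finset.sum_pos' (fun y _ => rpow_nonneg (Finset.sum_nonneg fun u _ => hP0 u y) _)
      ⟨y0, Finset.mem_univ _, rpow_pos_of_pos ?_ _⟩
    exact Finset.sum_pos' (fun u _ => hP0 u y0)
      ⟨u0, Finset.mem_univ _, rpow_pos_of_pos (mul_pos hu0 hy0) _⟩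
  · rw [div_le_iff₀ hSp, Finset.sum_mul]
    refine Finset.sum_le_sum fun y _ => ?_
    rw [← Real.mul_rpow (Finset.sum_nonneg fun x _ =>
      mul_nonneg (hQ.1 x) (rpow_nonneg ((hW x).1 y) _)) hSpos.le]
    refine Real.rpow_le_rpow (Finset.sum_nonneg fun u _ => hP0 u y) ?_ hi
    calc ∑ u, (PU u * Z u y) ^ α ≤ ∑ u, PU u ^ α * ∑ x, V u x * W x y ^ α := by
          refine Finset.sum_le_sum fun u _ => ?_
          rw [Real.mul_rpow (hPU.1 u) (hZ0 u y)]
          refine mul_le_mul_of_nonneg_left ?_ (rpow_nonneg (hPU.1 u) _)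
          exact Real.rpow_arith_mean_le_arith_mean_rpow Finset.univ (V u) (fun x => W x y)
            (fun x _ => (hV u).1 x) (hV u).2 (fun x _ => (hW x).1 y) hα.le
      _ = (∑ x, Q x * W x y ^ α) * S := by
          simp only [Finset.mul_sum, Finset.sum_mul]
          rw [Finset.sum_comm]
          refine Finset.sum_congr rfl fun x _ => ?_
          simp only [Q]
          rw [mul_right_comm, div_mul_cancel₀ _ hSpos.ne', Finset.sum_mul]
          refine Finset.sum_congr rfl fun u _ => ?_
          ring
end

section
/- Let 𝒳, 𝒴 be nonempty finite sets, α ∈ (1,∞), and W a channel from 𝒳 to 𝒴. Then sup over probability mass functions Q on 𝒳 of I_α^S(Q,W) ≤ log ∑_{y∈𝒴} max_{x∈𝒳} W(y|x); that is, the maximal α-leakage is upper bounded by the maximal leakage (the Sibson mutual information of order ∞). -/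
open Real BigOperators

/-- Maximal α-leakage of a channel `W`. -/
noncomputable def maxAlphaLeakage (α : ℝ) {X Y : Type} [Fintype X] [Fintype Y]
    (W : X → Y → ℝ) : ℝ :=
  sSup {v : ℝ | ∃ Q : X → ℝ, IsPMF Q ∧ v = sibsonMI α Q W}

/-- the maximal α-leakage is upper bounded by the maximal
leakage `log ∑ y, max_x W(y|x)`. -/
theorem maxAlphaLeakage_le_maximalLeakage {X Y : Type}
    [Fintype X] [Fintype Y] [Nonempty X] [Nonempty Y]
    (α : ℝ) (hα : 1 < α)
    (W : X → Y → ℝ) (hW : ∀ x, IsPMF (W x)) :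
    maxAlphaLeakage α W ≤ Real.log (∑ y, ⨆ x, W x y) := by
  have hα0 : 0 < α := by linarith
  have hα1 : 0 < α - 1 := by linarith
  have hle : ∀ x y, W x y ≤ ⨆ x, W x y := fun x y =>
    le_ciSup (f := fun x => W x y) (Set.finite_range _).bddAbove x
  have hM0 : ∀ y, 0 ≤ ⨆ x, W x y := fun y => Real.iSup_nonneg fun x => (hW x).1 y
  have hM1 : 1 ≤ ∑ y, ⨆ x, W x y := by
    obtain ⟨x⟩ := ‹Nonempty X›
    rw [← (hW x).2]
    exact Finset.sum_le_sum fun y _ => hle x y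
  obtain ⟨x0⟩ := id ‹Nonempty X›
  classical
  refine csSup_le ⟨_, Pi.single x0 1, ⟨fun x => ?_, by simp⟩, rfl⟩ ?_
  · by_cases h : x = x0
    · subst h; simp
    · simp [h]
  rintro v ⟨Q, hQ, rfl⟩
  unfold sibsonMI
  generalize hM : (fun y => ⨆ x, W x y) = M at *
  have hMy : ∀ y, (⨆ x, W x y) = M y := fun y => congrFun hM y
  simp only [hMy] at *
  have hp0 : ∀ y, 0 ≤ ∑ x, Q x * W x y := fun y =>
    Finset.sum_nonneg fun x _ => mul_nonneg (hQ.1 x) ((hW x).1 y)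
  have hp1 : ∑ y, ∑ x, Q x * W x y = 1 := by
    rw [Finset.sum_comm]
    simp only [← Finset.mul_sum, (hW _).2, mul_one, hQ.2]
  have hs0 : ∀ y, 0 ≤ ∑ x, Q x * W x y ^ α := fun y =>
    Finset.sum_nonneg fun x _ => mul_nonneg (hQ.1 x) (Real.rpow_nonneg ((hW x).1 y) _)
  have hterm : ∀ y, (∑ x, Q x * W x y ^ α) ^ (1 / α)
      ≤ M y ^ ((α - 1) / α) * (∑ x, Q x * W x y) ^ (1 / α) := by
    intro y
    have h1 : ∑ x, Q x * W x y ^ α ≤ M y ^ (α - 1) * ∑ x, Q x * W x y := by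
      rw [Finset.mul_sum]
      refine Finset.sum_le_sum fun x _ => ?_
      have hw := (hW x).1 y
      have e : W x y ^ α = W x y ^ (α - 1) * W x y := by
        conv_lhs => rw [show α = (α - 1) + 1 by ring]
        rw [Real.rpow_add_of_nonneg hw hα1.le zero_le_one, Real.rpow_one]
      have h2 : W x y ^ (α - 1) ≤ M y ^ (α - 1) := Real.rpow_le_rpow hw (hle x y) hα1.le
      rw [e]
      have := mul_le_mul_of_nonneg_right h2 (mul_nonneg (hQ.1 x) hw)
      linarith
    refine (Real.rpow_le_rpow (hs0 y) h1 (by positivity)).trans_eq ?_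
    rw [Real.mul_rpow (Real.rpow_nonneg (hM0 y) _) (hp0 y), ← Real.rpow_mul (hM0 y)]
    congr 2
    ring
  have hconj : (α / (α - 1)).HolderConjugate α := by
    rw [Real.holderConjugate_iff]
    refine ⟨by rw [lt_div_iff₀ hα1]; linarith, ?_⟩
    field_simp
    ring
  have hH := Real.inner_le_Lp_mul_Lq_of_nonneg Finset.univ hconj
    (f := fun y => M y ^ ((α - 1) / α)) (g := fun y => (∑ x, Q x * W x y) ^ (1 / α))
    (fun y _ => Real.rpow_nonneg (hM0 y) _) (fun y _ => Real.rpow_nonneg (hp0 y) _)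
  have e1 : ∀ y, (M y ^ ((α - 1) / α)) ^ (α / (α - 1)) = M y := fun y => by
    rw [← Real.rpow_mul (hM0 y), show (α - 1) / α * (α / (α - 1)) = 1 by field_simp,
      Real.rpow_one]
  have e2 : ∀ y, ((∑ x, Q x * W x y) ^ (1 / α)) ^ α = ∑ x, Q x * W x y := fun y => by
    rw [← Real.rpow_mul (hp0 y), show 1 / α * α = 1 by field_simp, Real.rpow_one]
  simp only [e1, e2, hp1, Real.one_rpow, mul_one] at hH
  have hS := (Finset.sum_le_sum fun y (_ : y ∈ Finset.univ) => hterm y).trans hH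
  have hS0 : 0 ≤ ∑ y, (∑ x, Q x * W x y ^ α) ^ (1 / α) :=
    Finset.sum_nonneg fun y _ => Real.rpow_nonneg (hs0 y) _
  rcases hS0.eq_or_lt with h | h
  · rw [← h, Real.log_zero, mul_zero]
    exact Real.log_nonneg hM1
  · have hl := Real.log_le_log h hS
    rw [Real.log_rpow (by linarith)] at hl
    have hc : 0 ≤ α / (α - 1) := by positivity
    refine (mul_le_mul_of_nonneg_left hl hc).trans_eq ?_
    field_simp
end
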